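/- Let $V_1 = \bigoplus_{\mu \in I_1} V_1(\mu)$ and $V_2 = \bigoplus_{\mu \in I_2} V_2(\mu)$ be complex vector spaces decomposed as direct sums indexed by finite sets $I_1, I_2$, and set $M_i = \{\mu \in I_i \mid V_i(\mu) \neq 0\}$. Let $u = \sum_{\mu_1,\mu_2} c_{\mu_1\mu_2}\, \mathrm{id}_{V_1(\mu_1)} \otimes \mathrm{id}_{V_2(\mu_2)} \in \mathrm{End}(V_1 \otimes V_2)$ with scalars $c_{\mu_1\mu_2} \in \mathbb{C}$. Suppose that for every $x_1 \in \mathrm{End}(V_1) \otimes \mathrm{id}$ and every $x_2 \in \mathrm{id} \otimes \mathrm{End}(V_2)$ one has $[x_2,[x_1,u]] = 0$, where $[\cdot,\cdot]$ is the commutator bracket on $\mathrm{End}(V_1 \otimes V_2)$. Then there exist complex numbers $(a_\mu)_{\mu \in M_1}$ and $(b_\mu)_{\mu \in M_2}$ such that $c_{\mu_1\mu_2} = a_{\mu_1} + b_{\mu_2}$ for all $\mu_1 \in M_1$ and $\mu_2 \in M_2$. -/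

import Mathlib

/-! The vectors of `V₁(μ) ⊗ V₂(ν)` are eigenvectors of `u` with eigenvalue `c μ ν`. Take nonzero
`v ∈ V₁(μ)`, `v' ∈ V₁(μ')`, `w ∈ V₂(ν)`, `w' ∈ V₂(ν')` and endomorphisms with `f v = v'`, `g w = w'`.
Evaluating `[1 ⊗ g, [f ⊗ 1, u]] = 0` at `v ⊗ w` gives
`(c μ ν - c μ' ν - c μ ν' + c μ' ν') • v' ⊗ w' = 0`, and `v' ⊗ w' ≠ 0`, so the alternating sum
vanishes (`alternating_sum_eq_zero`). With base indices `p`, `q` of nonzero summands,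
`a μ = c μ q` and `b ν = c p ν - c p q` then solve the problem. -/

open scoped TensorProduct DirectSum

open TensorProduct in
/-- If `u` is scalar on the four tensors `v ⊗ w`, `v' ⊗ w`, `v ⊗ w'`, `v' ⊗ w'` and
`[1 ⊗ g, [f ⊗ 1, u]] = 0` for all `f`, `g`, the alternating sum of the four scalars is zero. -/
lemma alternating_sum_eq_zero {K V W : Type*} [Field K] [AddCommGroup V] [Module K V]
    [AddCommGroup W] [Module K W] (u : Module.End K (V ⊗[K] W))
    (hcomm : ∀ (f : Module.End K V) (g : Module.End K W),
      ⁅TensorProduct.map (LinearMap.id : V →ₗ[K] V) g,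
        ⁅TensorProduct.map f (LinearMap.id : W →ₗ[K] W), u⁆⁆ = 0)
    {v v' : V} {w w' : W} (hv : v ≠ 0) (hv' : v' ≠ 0) (hw : w ≠ 0) (hw' : w' ≠ 0)
    {a b c d : K} (h₁ : u (v ⊗ₜ w) = a • v ⊗ₜ w) (h₂ : u (v' ⊗ₜ w) = b • v' ⊗ₜ w)
    (h₃ : u (v ⊗ₜ w') = c • v ⊗ₜ w') (h₄ : u (v' ⊗ₜ w') = d • v' ⊗ₜ w') :
    a - b - c + d = 0 := by
  obtain ⟨φ, hφ⟩ := Module.Projective.exists_dual_ne_zero K hv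
  obtain ⟨ψ, hψ⟩ := Module.Projective.exists_dual_ne_zero K hw
  obtain ⟨f, hf⟩ : ∃ f : Module.End K V, f v = v' :=
    ⟨φ.smulRight ((φ v)⁻¹ • v'), by simp [smul_smul, hφ]⟩
  obtain ⟨g, hg⟩ : ∃ g : Module.End K W, g w = w' :=
    ⟨ψ.smulRight ((ψ w)⁻¹ • w'), by simp [smul_smul, hψ]⟩
  have h := LinearMap.congr_fun (hcomm f g) (v ⊗ₜ w)
  simp only [LieRing.of_associative_ring_bracket, LinearMap.sub_apply, Module.End.mul_apply,
    map_sub, map_smul, TensorProduct.map_tmul, LinearMap.id_apply, hf, hg, h₁, h₂, h₃, h₄,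
    LinearMap.zero_apply] at h
  have h' : (a - b - c + d) • (v' ⊗ₜ[K] w') = 0 := by
    rw [← h]; module
  refine (smul_eq_zero.mp h').resolve_right fun h0 => ?_
  obtain ⟨φ', hφ'⟩ := Module.Projective.exists_dual_ne_zero K hv'
  obtain ⟨ψ', hψ'⟩ := Module.Projective.exists_dual_ne_zero K hw'
  have := congrArg (fun t => LinearMap.mul' K K (TensorProduct.map φ' ψ' t)) h0
  simp [hφ', hψ'] at this

/-- the linear algebra lemma: let `V₁ = ⨁_{μ ∈ I₁} V₁(μ)` and
`V₂ = ⨁_{μ ∈ I₂} V₂(μ)` be complex vector spaces and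
`u = ∑ c_{μ₁ μ₂} id_{V₁(μ₁)} ⊗ id_{V₂(μ₂)} ∈ End(V₁ ⊗ V₂)`.
If `[x₂, [x₁, u]] = 0` for all `x₁ ∈ End(V₁) ⊗ id` and `x₂ ∈ id ⊗ End(V₂)`, then there are
scalars `a, b` with `c_{μ₁ μ₂} = a_{μ₁} + b_{μ₂}` whenever `V₁(μ₁) ≠ 0` and `V₂(μ₂) ≠ 0`. -/
theorem tensor_double_commutant_scalars
    {I₁ I₂ : Type*} [Fintype I₁] [Fintype I₂] [DecidableEq I₁] [DecidableEq I₂]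
    (V₁ : I₁ → Type*) (V₂ : I₂ → Type*)
    [∀ i, AddCommGroup (V₁ i)] [∀ i, Module ℂ (V₁ i)]
    [∀ i, AddCommGroup (V₂ i)] [∀ i, Module ℂ (V₂ i)]
    (c : I₁ → I₂ → ℂ)
    -- `e₁ μ` is the projection of `⨁ i, V₁ i` onto the summand `V₁ μ`, i.e. `id_{V₁(μ)}`:
    (e₁ : I₁ → Module.End ℂ (⨁ i, V₁ i))
    (he₁ : ∀ μ, e₁ μ = (DirectSum.lof ℂ I₁ V₁ μ).comp (DirectSum.component ℂ I₁ V₁ μ))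
    (e₂ : I₂ → Module.End ℂ (⨁ i, V₂ i))
    (he₂ : ∀ μ, e₂ μ = (DirectSum.lof ℂ I₂ V₂ μ).comp (DirectSum.component ℂ I₂ V₂ μ))
    (u : Module.End ℂ ((⨁ i, V₁ i) ⊗[ℂ] (⨁ i, V₂ i)))
    (hu : u = ∑ μ₁ : I₁, ∑ μ₂ : I₂, c μ₁ μ₂ • TensorProduct.map (e₁ μ₁) (e₂ μ₂))
    (hcomm : ∀ (f : Module.End ℂ (⨁ i, V₁ i)) (g : Module.End ℂ (⨁ i, V₂ i)),
        ⁅TensorProduct.map (LinearMap.id : (⨁ i, V₁ i) →ₗ[ℂ] (⨁ i, V₁ i)) g,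
          ⁅TensorProduct.map f (LinearMap.id : (⨁ i, V₂ i) →ₗ[ℂ] (⨁ i, V₂ i)), u⁆⁆ = 0) :
    ∃ (a : I₁ → ℂ) (b : I₂ → ℂ), ∀ μ₁ μ₂,
      Nontrivial (V₁ μ₁) → Nontrivial (V₂ μ₂) → c μ₁ μ₂ = a μ₁ + b μ₂ := by
  have key : ∀ μ ν (x : V₁ μ) (y : V₂ ν),
      u (DirectSum.lof ℂ I₁ V₁ μ x ⊗ₜ DirectSum.lof ℂ I₂ V₂ ν y) =
        c μ ν • (DirectSum.lof ℂ I₁ V₁ μ x ⊗ₜ DirectSum.lof ℂ I₂ V₂ ν y) := by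
    intro μ ν x y
    have H₁ : ∀ i, e₁ i (DirectSum.lof ℂ I₁ V₁ μ x) =
        if i = μ then DirectSum.lof ℂ I₁ V₁ μ x else 0 := by
      intro i
      split_ifs with h
      · subst h; simp [he₁, DirectSum.component.lof_self]
      · simp [he₁, DirectSum.component.of, Ne.symm h]
    have H₂ : ∀ i, e₂ i (DirectSum.lof ℂ I₂ V₂ ν y) =
        if i = ν then DirectSum.lof ℂ I₂ V₂ ν y else 0 := by
      intro i
      split_ifs with h
      · subst h; simp [he₂, DirectSum.component.lof_self]
      · simp [he₂, DirectSum.component.of, Ne.symm h]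
    simp only [hu, LinearMap.sum_apply, LinearMap.smul_apply, TensorProduct.map_tmul, H₁, H₂]
    rw [Finset.sum_eq_single μ, Finset.sum_eq_single ν] <;> simp +contextual
  have inj₁ : ∀ μ (x : V₁ μ), x ≠ 0 → DirectSum.lof ℂ I₁ V₁ μ x ≠ 0 := fun μ x hx h =>
    hx (by rw [← DirectSum.component.lof_self ℂ μ x, h, map_zero])
  have inj₂ : ∀ μ (x : V₂ μ), x ≠ 0 → DirectSum.lof ℂ I₂ V₂ μ x ≠ 0 := fun μ x hx h =>
    hx (by rw [← DirectSum.component.lof_self ℂ μ x, h, map_zero])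
  have alt : ∀ μ μ' ν ν', Nontrivial (V₁ μ) → Nontrivial (V₁ μ') → Nontrivial (V₂ ν) →
      Nontrivial (V₂ ν') → c μ ν - c μ' ν - c μ ν' + c μ' ν' = 0 := by
    intro μ μ' ν ν' _ _ _ _
    obtain ⟨x, hx⟩ := exists_ne (0 : V₁ μ)
    obtain ⟨x', hx'⟩ := exists_ne (0 : V₁ μ')
    obtain ⟨y, hy⟩ := exists_ne (0 : V₂ ν)
    obtain ⟨y', hy'⟩ := exists_ne (0 : V₂ ν')
    exact alternating_sum_eq_zero u hcomm (inj₁ _ x hx) (inj₁ _ x' hx') (inj₂ _ y hy)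
      (inj₂ _ y' hy') (key _ _ _ _) (key _ _ _ _) (key _ _ _ _) (key _ _ _ _)
  by_cases hp : ∃ p, Nontrivial (V₁ p)
  · obtain ⟨p, hp⟩ := hp
    by_cases hq : ∃ q, Nontrivial (V₂ q)
    · obtain ⟨q, hq⟩ := hq
      refine ⟨fun μ => c μ q, fun ν => c p ν - c p q, fun μ ν hμ hν => ?_⟩
      linear_combination alt μ p ν q hμ hp hν hq
    · exact ⟨0, 0, fun _ ν _ hν => absurd ⟨ν, hν⟩ hq⟩
  · exact ⟨0, 0, fun μ _ hμ _ => absurd ⟨μ, hμ⟩ hp⟩
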